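/- Let (ψ_n)_{n∈ℕ} be a sequence of complex numbers satisfying the energy bound Σ_{n≥0} s^n |ψ_n|² < ∞ for some s > 1, and let ψ : ℂ → ℂ be its extended wavefunction. If there exist real numbers u < v such that ψ(x) = 0 for every real x ∈ [u, v], then ψ(z) = 0 for every z ∈ ℂ. (In other words, a nonzero wavefunction vanishing on a continuous segment of the real line must violate the energy bound for every s > 1.) -/

import Mathlib

open scoped BigOperators

/-- The `n`-th physicist Hermite polynomial evaluated at `z`:
`H_n(z) = 2^(n/2) He_n(z√2) = (√2)^n He_n(√2 z)`, with `He_n` the probabilist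
Hermite polynomial (Mathlib's `Polynomial.hermite n`). -/
noncomputable def physHermite (n : ℕ) (z : ℂ) : ℂ :=
  ((Real.sqrt 2 : ℝ) : ℂ) ^ n *
    Polynomial.aeval (((Real.sqrt 2 : ℝ) : ℂ) * z) (Polynomial.hermite n)

/-- The `n`-th term of the Hermite series of the wavefunction. -/
noncomputable def wfTerm (ψ : ℕ → ℂ) (z : ℂ) (n : ℕ) : ℂ :=
  ψ n * ((Real.sqrt (2 ^ n * n.factorial) : ℝ) : ℂ)⁻¹ * physHermite n z

/-- The extended wavefunction
`ψ(z) = π^(-1/4) e^(-z²/2) Σ_n ψ_n (2^n n!)^(-1/2) H_n(z)`. -/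
noncomputable def extWf (ψ : ℕ → ℂ) (z : ℂ) : ℂ :=
  ((Real.pi ^ ((1 : ℝ) / 4) : ℝ) : ℂ)⁻¹ * Complex.exp (-z ^ 2 / 2) * ∑' n, wfTerm ψ z n

/-!
The only analytic input is a bound on the Hermite polynomials that grows subexponentially in the
degree. Dividing `He_{n+2} = X He_{n+1} - (n+1) He_n` by `√(n+2)!` shows that
`|He_n(w)| / √n!` is at most `∏_{k<n} (1 + |w| / √(k+1))`, whose consecutive ratios tend to `1`.
By Cauchy–Schwarz with weights `s^n` the Hermite series then converges uniformly on every disc, so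
the extended wavefunction is entire and the identity principle applies.
-/

open Filter Finset Topology

section Majorants

lemma summable_prod_range_of_tendsto {A : Type*} [NormedCommRing A] [CompleteSpace A]
    {f : ℕ → A} {l : A} (hf : Tendsto f atTop (𝓝 l)) (hl : ‖l‖ < 1) :
    Summable fun n => ∏ k ∈ range n, f k := by
  obtain ⟨r, hlr, hr⟩ := exists_between hl
  refine summable_of_ratio_norm_eventually_le hr ?_
  filter_upwards [hf.norm.eventually_le_const hlr] with n hn
  rw [prod_range_succ, mul_comm]
  exact norm_mul_le_of_le hn le_rfl

lemma summable_mul_of_summable_weighted_sq {ι : Type*} {w a b : ι → ℝ} (hw : ∀ i, 0 < w i)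
    (ha : Summable fun i => w i * a i ^ 2) (hb : Summable fun i => b i ^ 2 / w i) :
    Summable fun i => a i * b i := by
  refine .of_norm_bounded (ha.add hb) fun i => ?_
  have amgm : 2 * (w i * |a i|) * |b i| ≤ (w i * |a i|) ^ 2 + |b i| ^ 2 := two_mul_le_add_sq _ _
  have hwi := hw i
  calc ‖a i * b i‖ = w i * |a i| * |b i| / w i := by
        rw [Real.norm_eq_abs, abs_mul]; field_simp
    _ ≤ ((w i * |a i|) ^ 2 + |b i| ^ 2) / w i := by
        gcongr
        linarith [show 0 ≤ w i * |a i| * |b i| by positivity]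
    _ = w i * a i ^ 2 + b i ^ 2 / w i := by
        rw [mul_pow, sq_abs, sq_abs]; field_simp

lemma le_prod_one_add_of_le_mul_add {a ε : ℕ → ℝ} (hε : ∀ n, 0 ≤ ε n) (h_zero : a 0 ≤ 1)
    (h_one : a 1 ≤ 1 + ε 0) (h_rec : ∀ n, a (n + 2) ≤ ε (n + 1) * a (n + 1) + a n) (n : ℕ) :
    a n ≤ ∏ k ∈ range n, (1 + ε k) := by
  induction n using Nat.twoStepInduction with
  | zero => simpa using h_zero
  | one => simpa using h_one
  | more n ih ih' =>
    have mono : ∏ k ∈ range n, (1 + ε k) ≤ ∏ k ∈ range (n + 1), (1 + ε k) := by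
      rw [prod_range_succ]
      exact le_mul_of_one_le_right (prod_nonneg fun k _ => by linarith [hε k])
        (by linarith [hε n])
    calc a (n + 2) ≤ ε (n + 1) * a (n + 1) + a n := h_rec n
      _ ≤ ε (n + 1) * ∏ k ∈ range (n + 1), (1 + ε k) + ∏ k ∈ range (n + 1), (1 + ε k) := by
        gcongr
        exacts [hε _, ih.trans mono]
      _ = ∏ k ∈ range (n + 2), (1 + ε k) := by
        rw [prod_range_succ _ (n + 1)]; ring

end Majorants

section Hermite

open Polynomial

lemma derivative_hermite_succ (n : ℕ) :
    derivative (hermite (n + 1)) = (n + 1) * hermite n := by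
  induction n with
  | zero => simp
  | succ n ih =>
    rw [hermite_succ (n + 1), derivative_sub, derivative_mul, derivative_X, ih, derivative_mul,
      hermite_succ n]
    simp only [derivative_add, derivative_natCast, derivative_one]
    push_cast
    ring

lemma hermite_add_two (n : ℕ) :
    hermite (n + 2) = X * hermite (n + 1) - (n + 1 : ℤ[X]) * hermite n := by
  rw [hermite_succ (n + 1), derivative_hermite_succ]

/-- The majorant `∏_{k<n} (1 + R / √(k+1))` of `|He_n(w)| / √n!` on the disc `|w| ≤ R`. -/
noncomputable def hermiteMajorant (R : ℝ) (n : ℕ) : ℝ :=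
  ∏ k ∈ range n, (1 + R / √(k + 1))

lemma hermiteMajorant_nonneg {R : ℝ} (hR : 0 ≤ R) (n : ℕ) : 0 ≤ hermiteMajorant R n :=
  prod_nonneg fun _ _ => by positivity

lemma hermiteMajorant_le_hermiteMajorant {R R' : ℝ} (hR : 0 ≤ R) (hRR' : R ≤ R') (n : ℕ) :
    hermiteMajorant R n ≤ hermiteMajorant R' n :=
  prod_le_prod (fun _ _ => by positivity) fun _ _ => by gcongr

lemma summable_hermiteMajorant_sq_div_pow (R : ℝ) {s : ℝ} (hs : 1 < s) :
    Summable fun n => hermiteMajorant R n ^ 2 / s ^ n := by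
  have sqrt_atTop : Tendsto (fun k : ℕ => √((k : ℝ) + 1)) atTop atTop :=
    Real.tendsto_sqrt_atTop.comp
      (tendsto_atTop_add_const_right _ _ tendsto_natCast_atTop_atTop)
  have ratio : Tendsto (fun k : ℕ => (1 + R / √((k : ℝ) + 1)) ^ 2 / s) atTop
      (𝓝 ((1 + 0) ^ 2 / s)) :=
    (((sqrt_atTop.const_div_atTop R).const_add 1).pow 2).div_const s
  have limit_lt_one : ‖((1 : ℝ) + 0) ^ 2 / s‖ < 1 := by
    rw [add_zero, one_pow, Real.norm_of_nonneg (by positivity)]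
    exact (div_lt_one (by positivity)).2 hs
  simpa only [hermiteMajorant, prod_div_distrib, prod_pow, prod_const, card_range] using
    summable_prod_range_of_tendsto ratio limit_lt_one

section NormedRing

variable {A : Type*} [NormedRing A] [NormOneClass A]

lemma norm_aeval_hermite_add_two_le (w : A) (n : ℕ) :
    ‖aeval w (hermite (n + 2))‖ ≤
      ‖w‖ * ‖aeval w (hermite (n + 1))‖ + (n + 1) * ‖aeval w (hermite n)‖ := by
  have norm_succ_le : ‖(n + 1 : A)‖ ≤ n + 1 := by
    simpa using Nat.norm_cast_le (α := A) (n + 1)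
  rw [hermite_add_two]
  simp only [map_sub, map_mul, aeval_X, map_add, map_natCast, map_one]
  exact norm_sub_le_of_le (norm_mul_le _ _) (norm_mul_le_of_le norm_succ_le le_rfl)

lemma norm_aeval_hermite_le (w : A) (n : ℕ) :
    ‖aeval w (hermite n)‖ ≤ √n.factorial * hermiteMajorant ‖w‖ n := by
  have sqrt_factorial_succ (m : ℕ) : √(m + 1).factorial = √(m + 1) * √m.factorial := by
    rw [Nat.factorial_succ, Nat.cast_mul, Real.sqrt_mul (Nat.cast_nonneg _), Nat.cast_succ]
  rw [← div_le_iff₀' (by positivity)]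
  refine le_prod_one_add_of_le_mul_add (a := fun n => ‖aeval w (hermite n)‖ / √n.factorial)
    (ε := fun k => ‖w‖ / √(k + 1)) (fun k => by positivity) (by simp) (by simp) (fun m => ?_) n
  have succ_le : (m + 1 : ℝ) ≤ √(m + 1 + 1) * √(m + 1) := by
    rw [← Real.sqrt_mul (by positivity)]
    exact Real.le_sqrt_of_sq_le (by nlinarith)
  calc ‖aeval w (hermite (m + 2))‖ / √(m + 2).factorial
      ≤ (‖w‖ * ‖aeval w (hermite (m + 1))‖ +
          √(m + 1 + 1) * √(m + 1) * ‖aeval w (hermite m)‖) / √(m + 2).factorial := by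
        gcongr
        exact (norm_aeval_hermite_add_two_le w m).trans (by gcongr)
    _ = ‖w‖ / √((m + 1 : ℕ) + 1) * (‖aeval w (hermite (m + 1))‖ / √(m + 1).factorial) +
          ‖aeval w (hermite m)‖ / √m.factorial := by
        rw [sqrt_factorial_succ (m + 1), sqrt_factorial_succ m]
        push_cast
        field_simp

end NormedRing

end Hermite

section ExtendedWavefunction

lemma norm_wfTerm_le (ψ : ℕ → ℂ) (z : ℂ) (n : ℕ) :
    ‖wfTerm ψ z n‖ ≤ ‖ψ n‖ * hermiteMajorant (√2 * ‖z‖) n := by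
  have norm_arg : ‖(√2 : ℂ) * z‖ = √2 * ‖z‖ := by
    rw [norm_mul, Complex.norm_of_nonneg (Real.sqrt_nonneg 2)]
  have sqrt_normalization : √(2 ^ n * n.factorial) = √2 ^ n * √n.factorial := by
    rw [← Real.sqrt_sq (show 0 ≤ √2 ^ n by positivity), pow_right_comm, Real.sq_sqrt zero_le_two,
      Real.sqrt_mul (by positivity)]
  have hermite_le := norm_aeval_hermite_le ((√2 : ℂ) * z) n
  rw [norm_arg] at hermite_le
  calc ‖wfTerm ψ z n‖
      = ‖ψ n‖ * (‖Polynomial.aeval ((√2 : ℂ) * z) (Polynomial.hermite n)‖ / √n.factorial) := by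
        rw [wfTerm, physHermite, sqrt_normalization, norm_mul, norm_mul, norm_mul, norm_inv,
          norm_pow, Complex.norm_of_nonneg (by positivity), Complex.norm_of_nonneg (by positivity)]
        field_simp
    _ ≤ ‖ψ n‖ * hermiteMajorant (√2 * ‖z‖) n := by
        gcongr
        exact (div_le_iff₀' (by positivity)).2 hermite_le

lemma differentiable_wfTerm (ψ : ℕ → ℂ) (n : ℕ) : Differentiable ℂ fun z => wfTerm ψ z n := by
  have hermite_comp : Differentiable ℂ fun z : ℂ =>
      Polynomial.aeval ((√2 : ℂ) * z) (Polynomial.hermite n) :=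
    (Polynomial.hermite n).differentiable_aeval.comp (differentiable_id.const_mul (√2 : ℂ))
  exact (hermite_comp.const_mul _).const_mul _

variable {ψ : ℕ → ℂ} {s : ℝ}

lemma summable_norm_mul_hermiteMajorant (hs : 1 < s)
    (hE : Summable fun n => s ^ n * ‖ψ n‖ ^ 2) (R : ℝ) :
    Summable fun n => ‖ψ n‖ * hermiteMajorant R n :=
  summable_mul_of_summable_weighted_sq (fun n => by positivity) hE
    (summable_hermiteMajorant_sq_div_pow R hs)

lemma differentiable_tsum_wfTerm (hs : 1 < s) (hE : Summable fun n => s ^ n * ‖ψ n‖ ^ 2) :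
    Differentiable ℂ fun z => ∑' n, wfTerm ψ z n := by
  intro z
  have on_ball : DifferentiableOn ℂ (fun z => ∑' n, wfTerm ψ z n) (Metric.ball 0 (‖z‖ + 1)) := by
    refine Complex.differentiableOn_tsum_of_summable_norm
      (summable_norm_mul_hermiteMajorant hs hE (√2 * (‖z‖ + 1)))
      (fun n => (differentiable_wfTerm ψ n).differentiableOn) Metric.isOpen_ball fun n w hw => ?_
    have hw' : ‖w‖ ≤ ‖z‖ + 1 := (mem_ball_zero_iff.1 hw).le
    refine (norm_wfTerm_le ψ w n).trans ?_
    gcongr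
    exact hermiteMajorant_le_hermiteMajorant (by positivity) (by gcongr) n
  exact on_ball.differentiableAt (Metric.isOpen_ball.mem_nhds (by simp))

lemma differentiable_extWf (hs : 1 < s) (hE : Summable fun n => s ^ n * ‖ψ n‖ ^ 2) :
    Differentiable ℂ (extWf ψ) :=
  .mul (by fun_prop) (differentiable_tsum_wfTerm hs hE)

theorem extWf_eq_zero_of_zero_on_segment_general (hs : 1 < s)
    (hE : Summable fun n => s ^ n * ‖ψ n‖ ^ 2) {z₀ : ℂ}
    (hzero : ∃ᶠ z in 𝓝[≠] z₀, extWf ψ z = 0) : extWf ψ = 0 :=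
  AnalyticOnNhd.eq_of_frequently_eq
    (Complex.analyticOnNhd_univ_iff_differentiable.2 (differentiable_extWf hs hE))
    analyticOnNhd_const hzero

end ExtendedWavefunction

lemma frequently_nhdsNE_ofReal_of_forall_mem_Icc {p : ℂ → Prop} {u v : ℝ} (huv : u < v)
    (hp : ∀ x ∈ Set.Icc u v, p x) : ∃ᶠ z in 𝓝[≠] (u : ℂ), p z := by
  have ofReal_tendsto : Tendsto (fun x : ℝ => (x : ℂ)) (𝓝[>] u) (𝓝[≠] (u : ℂ)) :=
    Complex.continuous_ofReal.continuousWithinAt.tendsto_nhdsWithin fun x hx => by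
      simpa using ne_of_gt hx
  exact ofReal_tendsto.frequently (Eventually.frequently (mem_of_superset (Icc_mem_nhdsGT huv) hp))

/-- If a wavefunction satisfying the energy bound `Σ s^n |ψ_n|² < ∞` for some `s > 1`
vanishes on a segment `[u, v]` of the real line, then it vanishes identically on `ℂ`. -/
theorem extWf_eq_zero_of_zero_on_segment (ψ : ℕ → ℂ) (s : ℝ) (hs : 1 < s)
    (hE : Summable fun n => s ^ n * ‖ψ n‖ ^ 2)
    (u v : ℝ) (huv : u < v)
    (hzero : ∀ x : ℝ, x ∈ Set.Icc u v → extWf ψ (x : ℂ) = 0) :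
    ∀ z : ℂ, extWf ψ z = 0 :=
  fun z => congrFun (extWf_eq_zero_of_zero_on_segment_general hs hE
    (frequently_nhdsNE_ofReal_of_forall_mem_Icc huv hzero)) z
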